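/- arXiv:2108.00411 — 2 statements merged into one kernel-verified Lean document; each statement's English description precedes it below -/
import Mathlib

section
/- Let b ∈ SV satisfy b(t²) ∼ b(t) on (0,∞), with associated functions B₀ and B∞. Assume there exist real numbers α < 0 < β and the function u ↦ u^{−α}·B∞(u) is almost decreasing on (0,1] while u ↦ u^{−β}·B₀(u) is almost increasing on (0,1] (i.e. ρ_{B∞} < 0 < π_{B₀}). Then there exists a function Ψ:(0,∞)→(0,∞) with Ψ ∼ b such that inf_{k∈ℤ} Ψ(λ_{k+1})/Ψ(λ_k) > 1. -/
open Set MeasureTheory Real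

/-- `f` is almost increasing on `S`: there is `C > 0` with `f s ≤ C * f t` whenever `s ≤ t` in `S`. -/
def AlmostIncreasingOn (f : ℝ → ℝ) (S : Set ℝ) : Prop :=
  ∃ C > (0:ℝ), ∀ s ∈ S, ∀ t ∈ S, s ≤ t → f s ≤ C * f t

/-- `f` is almost decreasing on `S`: there is `C > 0` with `f t ≤ C * f s` whenever `s ≤ t` in `S`. -/
def AlmostDecreasingOn (f : ℝ → ℝ) (S : Set ℝ) : Prop :=
  ∃ C > (0:ℝ), ∀ s ∈ S, ∀ t ∈ S, s ≤ t → f t ≤ C * f s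

/-- A measurable positive function `b` on `(0,∞)` is slowly varying if for every `ε > 0`,
`t ↦ t^ε * b t` is almost increasing and `t ↦ t^(-ε) * b t` is almost decreasing on `(0,∞)`. -/
def SlowlyVarying (b : ℝ → ℝ) : Prop :=
  Measurable b ∧ (∀ t ∈ Ioi (0:ℝ), 0 < b t) ∧
  ∀ ε > (0:ℝ), AlmostIncreasingOn (fun t => t ^ ε * b t) (Ioi 0) ∧
    AlmostDecreasingOn (fun t => t ^ (-ε) * b t) (Ioi 0)

/-- `f ∼ g` on `S`: there are `c, C > 0` with `c * g x ≤ f x ≤ C * g x` for all `x ∈ S`. -/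
def EquivOn (f g : ℝ → ℝ) (S : Set ℝ) : Prop :=
  ∃ c > (0:ℝ), ∃ C > (0:ℝ), ∀ x ∈ S, c * g x ≤ f x ∧ f x ≤ C * g x

/-- The associated function `B₀(u) = b(e^{1 - 1/u})`. -/
noncomputable def assocB0 (b : ℝ → ℝ) (u : ℝ) : ℝ := b (Real.exp (1 - 1 / u))

/-- The associated function `B∞(u) = b(e^{1/u - 1})`. -/
noncomputable def assocBinf (b : ℝ → ℝ) (u : ℝ) : ℝ := b (Real.exp (1 / u - 1))

/-- `ℓ(t) = 1 + |log t|`. -/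
noncomputable def ell (t : ℝ) : ℝ := 1 + |Real.log t|

/-- The sequence `λ_k`: `λ_k = e^{1 - e^{-k}}` for `k ≤ -1` and `λ_k = e^{e^k - 1}` for `k ≥ 0`. -/
noncomputable def lam (k : ℤ) : ℝ :=
  if k < 0 then Real.exp (1 - Real.exp (-(k : ℝ))) else Real.exp (Real.exp (k : ℝ) - 1)

theorem lam_of_nonneg {k : ℤ} (hk : 0 ≤ k) : lam k = exp (exp (k : ℝ) - 1) :=
  if_neg hk.not_gt

theorem lam_of_nonpos {k : ℤ} (hk : k ≤ 0) : lam k = exp (1 - exp (-(k : ℝ))) := by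
  rcases hk.lt_or_eq with h | rfl
  · exact if_pos h
  · simp [lam]

theorem lam_pos (k : ℤ) : 0 < lam k := by
  unfold lam
  split_ifs <;> exact exp_pos _

theorem strictMono_lam : StrictMono lam := by
  refine strictMono_int_of_lt_succ fun k => ?_
  rcases lt_or_ge k 0 with hk | hk
  · rw [lam_of_nonpos hk.le, lam_of_nonpos (show k + 1 ≤ 0 by lia)]
    gcongr
    exact lt_add_one k
  · rw [lam_of_nonneg hk, lam_of_nonneg (show 0 ≤ k + 1 by lia)]
    gcongr
    exact lt_add_one k

/-- An almost increasing sequence is equivalent to its running supremum, which is monotone. -/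
theorem exists_monotone_between {c : ℤ → ℝ} {C : ℝ} (h : ∀ j k, j ≤ k → c j ≤ C * c k) :
    ∃ d : ℤ → ℝ, Monotone d ∧ ∀ k, c k ≤ d k ∧ d k ≤ C * c k := by
  have hbdd (k : ℤ) : BddAbove (c '' Iic k) := by
    refine ⟨C * c k, ?_⟩
    rintro _ ⟨j, hj, rfl⟩
    exact h j k hj
  refine ⟨fun k => sSup (c '' Iic k), fun j k hjk => ?_, fun k => ⟨?_, ?_⟩⟩
  · exact csSup_le_csSup (hbdd k) (nonempty_Iic.image c) (image_mono (Iic_subset_Iic.2 hjk))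
  · exact le_csSup (hbdd k) ⟨k, self_mem_Iic, rfl⟩
  · refine csSup_le (nonempty_Iic.image c) ?_
    rintro _ ⟨j, hj, rfl⟩
    exact h j k hj

/-- Almost monotonicity on both half-lines yields almost monotonicity on all of `ℤ`. -/
theorem exists_almost_monotone_of_nonpos_of_nonneg {c : ℤ → ℝ} (hc : ∀ k, 0 < c k) {C D : ℝ}
    (hC : ∀ j k, j ≤ k → k ≤ 0 → c j ≤ C * c k) (hD : ∀ j k, 0 ≤ j → j ≤ k → c j ≤ D * c k) :
    ∃ E > 0, ∀ j k, j ≤ k → c j ≤ E * c k := by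
  have hC1 : 1 ≤ C := by
    have := hC 0 0 le_rfl le_rfl
    exact (le_mul_iff_one_le_left (hc 0)).1 this
  have hD1 : 1 ≤ D := by
    have := hD 0 0 le_rfl le_rfl
    exact (le_mul_iff_one_le_left (hc 0)).1 this
  refine ⟨C * D, by positivity, fun j k hjk => ?_⟩
  have hk := hc k
  rcases le_total k 0 with hk0 | hk0
  · calc c j ≤ C * c k := hC j k hjk hk0
      _ ≤ C * D * c k := by gcongr; exact le_mul_of_one_le_right (by positivity) hD1
  rcases le_total 0 j with hj0 | hj0
  · calc c j ≤ D * c k := hD j k hj0 hjk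
      _ ≤ C * D * c k := by gcongr; exact le_mul_of_one_le_left (by positivity) hC1
  · calc c j ≤ C * c 0 := hC j 0 hj0 le_rfl
      _ ≤ C * (D * c k) := by gcongr; exact hD 0 k le_rfl hk0
      _ = C * D * c k := by ring

/-- Lowering the exponent of an exponential weight preserves almost monotonicity. -/
theorem exp_weight_le_of_le {δ γ x y p q C : ℝ} (hδ : δ ≤ γ) (hxy : x ≤ y) (hp : 0 < p)
    (h : exp (-γ * x) * p ≤ C * (exp (-γ * y) * q)) :
    exp (-δ * x) * p ≤ C * (exp (-δ * y) * q) := by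
  have hsplit (z : ℝ) : exp (-δ * z) = exp ((γ - δ) * z) * exp (-γ * z) := by
    rw [← exp_add]
    ring_nf
  have hle : exp ((γ - δ) * x) ≤ exp ((γ - δ) * y) :=
    exp_le_exp.2 (mul_le_mul_of_nonneg_left hxy (sub_nonneg.2 hδ))
  calc exp (-δ * x) * p = exp ((γ - δ) * x) * (exp (-γ * x) * p) := by rw [hsplit]; ring
    _ ≤ exp ((γ - δ) * y) * (C * (exp (-γ * y) * q)) := by gcongr
    _ = C * (exp (-δ * y) * q) := by rw [hsplit]; ring

theorem exp_mul_lam_le_of_assocB0 {b : ℝ → ℝ} {β C : ℝ}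
    (h : ∀ s ∈ Ioc (0 : ℝ) 1, ∀ t ∈ Ioc (0 : ℝ) 1, s ≤ t →
      s ^ (-β) * assocB0 b s ≤ C * (t ^ (-β) * assocB0 b t))
    {j k : ℤ} (hjk : j ≤ k) (hk : k ≤ 0) :
    exp (-β * j) * b (lam j) ≤ C * (exp (-β * k) * b (lam k)) := by
  have hmem {i : ℤ} (hi : i ≤ 0) : exp (i : ℝ) ∈ Ioc (0 : ℝ) 1 :=
    ⟨exp_pos _, exp_le_one_iff.2 (by exact_mod_cast hi)⟩
  have key {i : ℤ} (hi : i ≤ 0) :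
      exp (i : ℝ) ^ (-β) * assocB0 b (exp i) = exp (-β * i) * b (lam i) := by
    rw [← exp_mul, assocB0, one_div, ← exp_neg, ← lam_of_nonpos hi, mul_comm (i : ℝ)]
  rw [← key hk, ← key (hjk.trans hk)]
  exact h _ (hmem (hjk.trans hk)) _ (hmem hk) (exp_le_exp.2 (by exact_mod_cast hjk))

theorem exp_mul_lam_le_of_assocBinf {b : ℝ → ℝ} {α C : ℝ}
    (h : ∀ s ∈ Ioc (0 : ℝ) 1, ∀ t ∈ Ioc (0 : ℝ) 1, s ≤ t →
      t ^ (-α) * assocBinf b t ≤ C * (s ^ (-α) * assocBinf b s))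
    {j k : ℤ} (hj : 0 ≤ j) (hjk : j ≤ k) :
    exp (α * j) * b (lam j) ≤ C * (exp (α * k) * b (lam k)) := by
  have hmem {i : ℤ} (hi : 0 ≤ i) : exp (-(i : ℝ)) ∈ Ioc (0 : ℝ) 1 :=
    ⟨exp_pos _, exp_le_one_iff.2 (neg_nonpos.2 (by exact_mod_cast hi))⟩
  have key {i : ℤ} (hi : 0 ≤ i) :
      exp (-(i : ℝ)) ^ (-α) * assocBinf b (exp (-i)) = exp (α * i) * b (lam i) := by
    rw [← exp_mul, neg_mul_neg, assocBinf, one_div, ← exp_neg, neg_neg, ← lam_of_nonneg hi,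
      mul_comm (i : ℝ)]
  rw [← key hj, ← key (hj.trans hjk)]
  exact h _ (hmem (hj.trans hjk)) _ (hmem hj)
    (exp_le_exp.2 (neg_le_neg (by exact_mod_cast hjk)))

theorem exists_increasing_discretization (b : ℝ → ℝ) (hb : SlowlyVarying b)
    (hsq : EquivOn (fun t => b (t ^ 2)) b (Ioi 0))
    (α β : ℝ) (hα : α < 0) (hβ : 0 < β)
    (hBinf : AlmostDecreasingOn (fun u => u ^ (-α) * assocBinf b u) (Ioc 0 1))
    (hB0 : AlmostIncreasingOn (fun u => u ^ (-β) * assocB0 b u) (Ioc 0 1)) :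
    ∃ Ψ : ℝ → ℝ, EquivOn Ψ b (Ioi 0) ∧
      ∃ r > (1:ℝ), ∀ k : ℤ, r ≤ Ψ (lam (k + 1)) / Ψ (lam k) := by
  obtain ⟨D, -, hD⟩ := hBinf
  obtain ⟨C, -, hC⟩ := hB0
  have hbpos := hb.2.1
  have hbl (k : ℤ) : 0 < b (lam k) := hbpos _ (lam_pos k)
  set δ := min β (-α)
  have hδ : 0 < δ := lt_min hβ (neg_pos.2 hα)
  have hcpos (k : ℤ) : 0 < exp (-δ * k) * b (lam k) := mul_pos (exp_pos _) (hbl k)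
  obtain ⟨E, hE, hEc⟩ := exists_almost_monotone_of_nonpos_of_nonneg hcpos (C := C) (D := D)
    (fun j k hjk hk => exp_weight_le_of_le (min_le_left _ _) (by exact_mod_cast hjk) (hbl j)
      (exp_mul_lam_le_of_assocB0 hC hjk hk))
    (fun j k hj hjk => exp_weight_le_of_le (min_le_right _ _) (by exact_mod_cast hjk) (hbl j)
      (by simpa only [neg_neg] using exp_mul_lam_le_of_assocBinf hD hj hjk))
  obtain ⟨d, hdmono, hd⟩ := exists_monotone_between hEc
  have hdpos (k : ℤ) : 0 < d k := (hcpos k).trans_le (hd k).1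
  have hcancel (k : ℤ) : exp (δ * k) * (exp (-δ * k) * b (lam k)) = b (lam k) := by
    rw [← mul_assoc, ← exp_add]
    simp
  have hΨ := strictMono_lam.injective.extend_apply (fun k : ℤ => exp (δ * k) * d k) b
  refine ⟨Function.extend lam (fun k : ℤ => exp (δ * k) * d k) b,
    ⟨1, one_pos, max 1 E, by positivity, fun x hx => ?_⟩, exp δ, one_lt_exp_iff.2 hδ, fun k => ?_⟩
  · have hbx : 0 < b x := hbpos x hx
    by_cases hxl : ∃ k, lam k = x
    · obtain ⟨k, rfl⟩ := hxl
      rw [hΨ, one_mul]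
      constructor
      · calc b (lam k) = exp (δ * k) * (exp (-δ * k) * b (lam k)) := (hcancel k).symm
          _ ≤ exp (δ * k) * d k := by gcongr; exact (hd k).1
      · calc exp (δ * k) * d k ≤ exp (δ * k) * (E * (exp (-δ * k) * b (lam k))) := by
              gcongr; exact (hd k).2
          _ = E * b (lam k) := by rw [mul_left_comm, hcancel]
          _ ≤ max 1 E * b (lam k) := by gcongr; exact le_max_right _ _
    · rw [Function.extend_apply' _ _ _ hxl, one_mul]
      exact ⟨le_rfl, le_mul_of_one_le_left hbx.le (le_max_left _ _)⟩
  · rw [hΨ, hΨ, le_div_iff₀ (mul_pos (exp_pos _) (hdpos k))]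
    calc exp δ * (exp (δ * k) * d k) = exp (δ * (k + 1 : ℤ)) * d k := by
          rw [← mul_assoc, ← exp_add]
          push_cast
          ring_nf
      _ ≤ exp (δ * (k + 1 : ℤ)) * d (k + 1) := by gcongr; exact hdmono (by lia)
end

section
/- Let 1 ≤ q < ∞ and let b ∈ SV satisfy b(t²) ∼ b(t) on (0,∞), with associated functions B₀ and B∞. Assume there exist real numbers α < 0 < β such that u ↦ u^{−α}·B₀(u) is almost decreasing on (0,1] and u ↦ u^{−β}·B∞(u) is almost increasing on (0,1] (i.e. ρ_{B₀} < 0 < π_{B∞}). Then there is a constant C > 0 such that for every non-negative measurable function f on (0,∞): (∫₀^∞ (b(t)·∫₀^t f(s) ds)^q dt/(t·ℓ(t)))^{1/q} ≤ C·(∫₀^∞ (t·b(t)·f(t)·ℓ(t))^q dt/(t·ℓ(t)))^{1/q}. -/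
open Set MeasureTheory Real

open scoped ENNReal

/-- **Schur test** with equal bounds on rows and columns. -/
lemma lintegral_rpow_lintegral_mul_le {X : Type*} [MeasurableSpace X] {μ : Measure X} [SFinite μ]
    {q : ℝ} (hq : 1 ≤ q) {k : X → X → ℝ≥0∞} (hk : Measurable (Function.uncurry k)) {A : ℝ≥0∞}
    (hrow : ∀ t, ∫⁻ s, k t s ∂μ ≤ A) (hcol : ∀ s, ∫⁻ t, k t s ∂μ ≤ A)
    {g : X → ℝ≥0∞} (hg : Measurable g) :
    ∫⁻ t, (∫⁻ s, k t s * g s ∂μ) ^ q ∂μ ≤ A ^ q * ∫⁻ s, g s ^ q ∂μ := by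
  have hq0 : 0 < q := by linarith
  have jensen : ∀ t, (∫⁻ s, k t s * g s ∂μ) ^ q ≤ A ^ (q - 1) * ∫⁻ s, k t s * g s ^ q ∂μ := by
    intro t
    have hkt : Measurable (k t) := hk.of_uncurry_left
    have h := eLpNorm'_le_eLpNorm'_mul_rpow_measure_univ (μ := μ.withDensity (k t)) (f := g)
      one_pos hq hg.aestronglyMeasurable
    simp only [eLpNorm', enorm_eq_self, ENNReal.rpow_one, div_one,
      withDensity_apply _ MeasurableSet.univ, Measure.restrict_univ] at h
    rw [lintegral_withDensity_eq_lintegral_mul _ hkt hg,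
      lintegral_withDensity_eq_lintegral_mul _ hkt (hg.pow_const q)] at h
    calc (∫⁻ s, k t s * g s ∂μ) ^ q
        ≤ ((∫⁻ s, k t s * g s ^ q ∂μ) ^ (1 / q) * (∫⁻ s, k t s ∂μ) ^ (1 - 1 / q)) ^ q :=
          ENNReal.rpow_le_rpow h hq0.le
      _ = (∫⁻ s, k t s * g s ^ q ∂μ) * (∫⁻ s, k t s ∂μ) ^ (q - 1) := by
          rw [ENNReal.mul_rpow_of_nonneg _ _ hq0.le, ← ENNReal.rpow_mul, ← ENNReal.rpow_mul,
            one_div_mul_cancel hq0.ne', ENNReal.rpow_one, sub_mul, one_div_mul_cancel hq0.ne',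
            one_mul]
      _ ≤ A ^ (q - 1) * ∫⁻ s, k t s * g s ^ q ∂μ := by
          rw [mul_comm]
          gcongr
          exact hrow t
  have hmeas : Measurable (Function.uncurry fun t s => k t s * g s ^ q) :=
    hk.mul ((hg.pow_const q).comp measurable_snd)
  calc ∫⁻ t, (∫⁻ s, k t s * g s ∂μ) ^ q ∂μ
      ≤ ∫⁻ t, A ^ (q - 1) * ∫⁻ s, k t s * g s ^ q ∂μ ∂μ := lintegral_mono jensen
    _ = A ^ (q - 1) * ∫⁻ s, (∫⁻ t, k t s ∂μ) * g s ^ q ∂μ := by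
        rw [lintegral_const_mul _ (Measurable.lintegral_prod_right hmeas),
          lintegral_lintegral_swap hmeas.aemeasurable]
        congr 1
        refine lintegral_congr fun s => ?_
        rw [lintegral_mul_const _ hk.of_uncurry_right]
    _ ≤ A ^ (q - 1) * ∫⁻ s, A * g s ^ q ∂μ := by
        gcongr with s
        exact hcol s
    _ = A ^ q * ∫⁻ s, g s ^ q ∂μ := by
        rw [lintegral_const_mul _ (hg.pow_const q), ← mul_assoc]
        congr 1
        calc A ^ (q - 1) * A = A ^ (q - 1) * A ^ (1 : ℝ) := by rw [ENNReal.rpow_one]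
          _ = A ^ q := by
            rw [← ENNReal.rpow_add_of_nonneg _ _ (by linarith) zero_le_one, sub_add_cancel]

/-- The odd primitive of `1 / (1 + |y|)`. -/
noncomputable def oddLog (y : ℝ) : ℝ := ∫ u in (0:ℝ)..y, 1 / (1 + |u|)

lemma hasDerivAt_oddLog (y : ℝ) : HasDerivAt oddLog (1 / (1 + |y|)) y := by
  have hc : Continuous fun u : ℝ => 1 / (1 + |u|) :=
    continuous_const.div (by fun_prop) fun u => by positivity
  exact hc.integral_hasStrictDerivAt 0 y |>.hasDerivAt

lemma oddLog_neg (y : ℝ) : oddLog (-y) = -oddLog y := by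
  have h := intervalIntegral.integral_comp_neg (a := 0) (b := y) fun u : ℝ => 1 / (1 + |u|)
  simp only [abs_neg, neg_zero] at h
  rw [oddLog, oddLog, h, ← intervalIntegral.integral_symm]

lemma oddLog_of_nonneg {y : ℝ} (hy : 0 ≤ y) : oddLog y = log (1 + y) := by
  have h : ∀ u ∈ uIcc 0 y, HasDerivAt (fun u => log (1 + u)) (1 / (1 + |u|)) u := by
    intro u hu
    rw [uIcc_of_le hy] at hu
    rw [abs_of_nonneg hu.1]
    exact ((hasDerivAt_id u).const_add 1).log (by simpa using (by linarith [hu.1] : 1 + u ≠ 0))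
  have hc : Continuous fun u : ℝ => 1 / (1 + |u|) :=
    continuous_const.div (by fun_prop) fun u => by positivity
  rw [oddLog, intervalIntegral.integral_eq_sub_of_hasDerivAt h (hc.intervalIntegrable _ _)]
  simp

/-- The logarithmic scale `t ↦ sign(log t) * log (ell t)`. -/
noncomputable def logScale (t : ℝ) : ℝ := oddLog (log t)

lemma ell_pos (t : ℝ) : 0 < ell t := by unfold ell; positivity

lemma measurable_ell : Measurable ell := by unfold ell; fun_prop

lemma measurable_logScale : Measurable logScale :=
  (continuous_iff_continuousAt.2 fun y => (hasDerivAt_oddLog y).continuousAt).measurable.comp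
    measurable_log

lemma strictMonoOn_logScale : StrictMonoOn logScale (Ioi 0) := by
  have h : StrictMono oddLog := strictMono_of_deriv_pos fun y => by
    rw [(hasDerivAt_oddLog y).deriv]; positivity
  exact h.comp_strictMonoOn strictMonoOn_log

lemma hasDerivAt_logScale {t : ℝ} (ht : 0 < t) : HasDerivAt logScale (1 / (t * ell t)) t := by
  refine ((hasDerivAt_oddLog (log t)).comp t (hasDerivAt_log ht.ne')).congr_deriv ?_
  rw [ell, one_div, one_div, mul_inv, mul_comm]

lemma exp_logScale_of_one_le {t : ℝ} (ht : 1 ≤ t) : exp (logScale t) = 1 + log t := by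
  have h := log_nonneg ht
  rw [logScale, oddLog_of_nonneg h, exp_log (by linarith)]

lemma exp_neg_logScale_of_le_one {t : ℝ} (h0 : 0 < t) (ht : t ≤ 1) :
    exp (-logScale t) = 1 - log t := by
  have h := log_nonpos h0.le ht
  rw [logScale, ← oddLog_neg, oddLog_of_nonneg (by linarith), exp_log (by linarith)]
  ring

/-- The measure `dt / (t * ell t)` on `(0, ∞)`. -/
noncomputable def logScaleMeasure : Measure ℝ :=
  (volume.restrict (Ioi 0)).withDensity fun t => ENNReal.ofReal (1 / (t * ell t))

instance : SFinite logScaleMeasure := by unfold logScaleMeasure; infer_instance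

lemma measurable_logScale_density : Measurable fun t => ENNReal.ofReal (1 / (t * ell t)) :=
  (measurable_const.div (measurable_id.mul measurable_ell)).ennreal_ofReal

lemma lintegral_logScaleMeasure (g : ℝ → ℝ≥0∞) :
    ∫⁻ t, g t ∂logScaleMeasure =
      ∫⁻ t in Ioi (0:ℝ), ENNReal.ofReal (1 / (t * ell t)) * g t :=
  lintegral_withDensity_eq_lintegral_mul_non_measurable _ measurable_logScale_density
    (Filter.Eventually.of_forall fun _ => ENNReal.ofReal_lt_top) g

lemma lintegral_logScaleMeasure_div (g : ℝ → ℝ≥0∞) :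
    ∫⁻ t, g t ∂logScaleMeasure =
      ∫⁻ t in Ioi (0:ℝ), g t / ENNReal.ofReal (t * ell t) := by
  rw [lintegral_logScaleMeasure]
  refine setLIntegral_congr_fun measurableSet_Ioi fun t ht => ?_
  have : 0 < t * ell t := mul_pos ht (ell_pos t)
  simp only [one_div, ENNReal.ofReal_inv_of_pos this, ENNReal.div_eq_inv_mul]

lemma lintegral_comp_logScale_le (g : ℝ → ℝ≥0∞) :
    ∫⁻ t, g (logScale t) ∂logScaleMeasure ≤ ∫⁻ v, g v := by
  have h := lintegral_image_eq_lintegral_abs_deriv_mul (s := Ioi 0) measurableSet_Ioi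
    (fun t ht => (hasDerivAt_logScale ht).hasDerivWithinAt) strictMonoOn_logScale.injOn g
  calc ∫⁻ t, g (logScale t) ∂logScaleMeasure
      = ∫⁻ v in logScale '' Ioi 0, g v := by
        rw [h, lintegral_logScaleMeasure]
        refine setLIntegral_congr_fun measurableSet_Ioi fun t ht => ?_
        have : 0 < t * ell t := mul_pos ht (ell_pos t)
        simp only [abs_of_pos (one_div_pos.2 this)]
    _ ≤ ∫⁻ v, g v := setLIntegral_le_lintegral _ _

/-- The one-sided exponential kernel `e^{-γ x}` on `x > 0`. -/
noncomputable def expKernel (γ : ℝ) : ℝ → ℝ≥0∞ :=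
  (Ioi 0).indicator fun x => ENNReal.ofReal (exp (-γ * x))

lemma measurable_expKernel (γ : ℝ) : Measurable (expKernel γ) :=
  Measurable.indicator (by fun_prop) measurableSet_Ioi

lemma lintegral_expKernel {γ : ℝ} (hγ : 0 < γ) :
    ∫⁻ x, expKernel γ x = ENNReal.ofReal (1 / γ) := by
  have hγ' : -γ < 0 := by linarith
  rw [expKernel, lintegral_indicator measurableSet_Ioi,
    ← ofReal_integral_eq_lintegral_ofReal (integrableOn_exp_mul_Ioi hγ' 0)
      (Filter.Eventually.of_forall fun x => (exp_pos _).le), integral_exp_mul_Ioi hγ']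
  simp

/-- A Hardy inequality in the logarithmic scale, with an exponential kernel. -/
lemma lintegral_rpow_expKernel_le {q : ℝ} (hq : 1 ≤ q) {γ : ℝ} (hγ : 0 < γ)
    {g : ℝ → ℝ≥0∞} (hg : Measurable g) :
    ∫⁻ t, (∫⁻ s, expKernel γ (logScale t - logScale s) * g s ∂logScaleMeasure) ^ q
        ∂logScaleMeasure
      ≤ ENNReal.ofReal (1 / γ) ^ q * ∫⁻ s, g s ^ q ∂logScaleMeasure := by
  refine lintegral_rpow_lintegral_mul_le hq
    (k := fun t s => expKernel γ (logScale t - logScale s)) ?_ (fun t => ?_) (fun s => ?_) hg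
  · exact (measurable_expKernel γ).comp
      ((measurable_logScale.comp measurable_fst).sub (measurable_logScale.comp measurable_snd))
  · refine (lintegral_comp_logScale_le fun v => expKernel γ (logScale t - v)).trans_eq ?_
    rw [lintegral_sub_left_eq_self (expKernel γ), lintegral_expKernel hγ]
  · refine (lintegral_comp_logScale_le fun v => expKernel γ (v - logScale s)).trans_eq ?_
    rw [lintegral_sub_right_eq_self (expKernel γ), lintegral_expKernel hγ]

/-- Lowering the exponent preserves almost monotonicity of `e^{δ V} b`. -/
lemma exp_mul_le_of_le {γ δ x y p r C : ℝ} (hγδ : γ ≤ δ) (hxy : x ≤ y)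
    (hr : 0 ≤ C * r) (h : exp (δ * y) * p ≤ C * (exp (δ * x) * r)) :
    exp (γ * y) * p ≤ C * (exp (γ * x) * r) := by
  have e : ∀ z, exp (γ * z) = exp ((γ - δ) * z) * exp (δ * z) := fun z => by
    rw [← exp_add]; ring_nf
  calc exp (γ * y) * p = exp ((γ - δ) * y) * (exp (δ * y) * p) := by rw [e]; ring
    _ ≤ exp ((γ - δ) * y) * (C * (exp (δ * x) * r)) := by gcongr
    _ = exp ((γ - δ) * y) * (exp (δ * x) * (C * r)) := by ring
    _ ≤ exp ((γ - δ) * x) * (exp (δ * x) * (C * r)) := by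
        gcongr ?_ * _
        exact exp_le_exp.2 (mul_le_mul_of_nonpos_left hxy (by linarith))
    _ = C * (exp (γ * x) * r) := by rw [e x]; ring

lemma exp_logScale_mul_le_of_le_one {b : ℝ → ℝ} {α : ℝ}
    (hB0 : AlmostDecreasingOn (fun u => u ^ (-α) * assocB0 b u) (Ioc 0 1)) :
    ∃ C > (0:ℝ), ∀ s t, 0 < s → s ≤ t → t ≤ 1 →
      exp (-α * logScale t) * b t ≤ C * (exp (-α * logScale s) * b s) := by
  obtain ⟨C, hC, h⟩ := hB0
  have key : ∀ t, 0 < t → t ≤ 1 → exp (logScale t) ∈ Ioc (0:ℝ) 1 ∧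
      exp (logScale t) ^ (-α) * assocB0 b (exp (logScale t))
        = exp (-α * logScale t) * b t := by
    intro t h0 h1
    have hv := exp_neg_logScale_of_le_one h0 h1
    have hl := log_nonpos h0.le h1
    refine ⟨⟨exp_pos _, exp_le_one_iff.2 ?_⟩, ?_⟩
    · rw [← neg_nonneg, ← one_le_exp_iff, hv]
      linarith
    · rw [assocB0, one_div, ← exp_neg, hv, sub_sub_cancel, exp_log h0, ← exp_mul, mul_comm (-α)]
  refine ⟨C, hC, fun s t hs hst ht => ?_⟩
  have ht0 := hs.trans_le hst
  rw [← (key t ht0 ht).2, ← (key s hs (hst.trans ht)).2]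
  exact h _ (key s hs (hst.trans ht)).1 _ (key t ht0 ht).1
    (exp_le_exp.2 (strictMonoOn_logScale.monotoneOn hs ht0 hst))

lemma exp_logScale_mul_le_of_one_le {b : ℝ → ℝ} {β : ℝ}
    (hBinf : AlmostIncreasingOn (fun u => u ^ (-β) * assocBinf b u) (Ioc 0 1)) :
    ∃ C > (0:ℝ), ∀ s t, 1 ≤ s → s ≤ t →
      exp (β * logScale t) * b t ≤ C * (exp (β * logScale s) * b s) := by
  obtain ⟨C, hC, h⟩ := hBinf
  have key : ∀ t, 1 ≤ t → exp (-logScale t) ∈ Ioc (0:ℝ) 1 ∧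
      exp (-logScale t) ^ (-β) * assocBinf b (exp (-logScale t))
        = exp (β * logScale t) * b t := by
    intro t h1
    have h0 : 0 < t := by linarith
    have hv := exp_logScale_of_one_le h1
    have hl := log_nonneg h1
    refine ⟨⟨exp_pos _, exp_le_one_iff.2 ?_⟩, ?_⟩
    · rw [neg_nonpos, ← one_le_exp_iff, hv]
      linarith
    · rw [assocBinf, one_div, ← exp_neg, neg_neg, hv, add_sub_cancel_left, exp_log h0, ← exp_mul,
        neg_mul_neg, mul_comm β]
  refine ⟨C, hC, fun s t hs hst => ?_⟩
  have hs0 : 0 < s := by linarith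
  rw [← (key t (hs.trans hst)).2, ← (key s hs).2]
  exact h _ (key t (hs.trans hst)).1 _ (key s hs).1
    (exp_le_exp.2 (neg_le_neg (strictMonoOn_logScale.monotoneOn hs0 (hs0.trans_le hst) hst)))

lemma exists_exp_logScale_mul_le {b : ℝ → ℝ} (hpos : ∀ t ∈ Ioi (0:ℝ), 0 < b t)
    {α β : ℝ} (hα : α < 0) (hβ : 0 < β)
    (hB0 : AlmostDecreasingOn (fun u => u ^ (-α) * assocB0 b u) (Ioc 0 1))
    (hBinf : AlmostIncreasingOn (fun u => u ^ (-β) * assocBinf b u) (Ioc 0 1)) :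
    ∃ γ > (0:ℝ), ∃ C > (0:ℝ), ∀ s t, 0 < s → s < t →
      b t ≤ C * (exp (-γ * (logScale t - logScale s)) * b s) := by
  obtain ⟨C₀, hC₀, h₀⟩ := exp_logScale_mul_le_of_le_one hB0
  obtain ⟨C₁, hC₁, h₁⟩ := exp_logScale_mul_le_of_one_le hBinf
  set γ := min (-α) β
  have below : ∀ s t, 0 < s → s ≤ t → t ≤ 1 →
      exp (γ * logScale t) * b t ≤ C₀ * (exp (γ * logScale s) * b s) := fun s t hs hst ht =>
    exp_mul_le_of_le (min_le_left _ _)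
      (strictMonoOn_logScale.monotoneOn hs (hs.trans_le hst) hst)
      (mul_pos hC₀ (hpos s hs)).le (h₀ s t hs hst ht)
  have above : ∀ s t, 1 ≤ s → s ≤ t →
      exp (γ * logScale t) * b t ≤ C₁ * (exp (γ * logScale s) * b s) := fun s t hs hst =>
    have hs0 : 0 < s := by linarith
    exp_mul_le_of_le (min_le_right _ _)
      (strictMonoOn_logScale.monotoneOn hs0 (hs0.trans_le hst) hst)
      (mul_pos hC₁ (hpos s hs0)).le (h₁ s t hs hst)
  have all : ∀ s t, 0 < s → s < t →
      exp (γ * logScale t) * b t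
        ≤ (C₀ + C₁ + C₁ * C₀) * (exp (γ * logScale s) * b s) := by
    intro s t hs hst
    have hX : 0 < exp (γ * logScale s) * b s := mul_pos (exp_pos _) (hpos s hs)
    have a0 := mul_pos hC₀ hX
    have a1 := mul_pos hC₁ hX
    have a2 := mul_pos hC₁ a0
    rcases le_total t 1 with ht | ht
    · linarith [below s t hs hst.le ht]
    · rcases le_total s 1 with hs1 | hs1
      · linarith [above 1 t le_rfl ht,
          mul_le_mul_of_nonneg_left (below s 1 hs hs1 le_rfl) hC₁.le]
      · linarith [above s t hs1 hst.le]
  refine ⟨γ, lt_min (by linarith) hβ, C₀ + C₁ + C₁ * C₀, by positivity, fun s t hs hst => ?_⟩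
  have e : exp (-γ * (logScale t - logScale s))
      = (exp (γ * logScale t))⁻¹ * exp (γ * logScale s) := by
    rw [← exp_neg, ← exp_add]; ring_nf
  calc b t = (exp (γ * logScale t))⁻¹ * (exp (γ * logScale t) * b t) := by
        rw [inv_mul_cancel_left₀ (exp_pos _).ne']
    _ ≤ (exp (γ * logScale t))⁻¹ *
          ((C₀ + C₁ + C₁ * C₀) * (exp (γ * logScale s) * b s)) := by
        exact mul_le_mul_of_nonneg_left (all s t hs hst) (by positivity)
    _ = _ := by rw [e]; ring

/-- The weighted primitive of `f` is dominated by an exponential-kernel integral in the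
logarithmic scale. -/
lemma ofReal_mul_lintegral_le_expKernel {b f : ℝ → ℝ} {γ C : ℝ} (hC : 0 ≤ C)
    (hf : ∀ t, 0 ≤ f t)
    (hb : ∀ s t, 0 < s → s < t → b t ≤ C * (exp (-γ * (logScale t - logScale s)) * b s))
    (t : ℝ) :
    ENNReal.ofReal (b t) * ∫⁻ s in Ioo (0:ℝ) t, ENNReal.ofReal (f s)
      ≤ ENNReal.ofReal C * ∫⁻ s, expKernel γ (logScale t - logScale s) *
          ENNReal.ofReal (s * b s * f s * ell s) ∂logScaleMeasure := by
  rw [lintegral_logScaleMeasure, ← lintegral_const_mul' _ _ ENNReal.ofReal_ne_top,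
    ← lintegral_const_mul' _ _ ENNReal.ofReal_ne_top]
  refine le_trans (setLIntegral_mono' measurableSet_Ioo fun s hs => ?_)
    (lintegral_mono_set Ioo_subset_Ioi_self)
  have hpos : 0 < s * ell s := mul_pos hs.1 (ell_pos s)
  have hmem : logScale t - logScale s ∈ Ioi (0:ℝ) :=
    sub_pos.2 (strictMonoOn_logScale hs.1 (hs.1.trans hs.2) hs.2)
  rw [expKernel, indicator_of_mem hmem, ← ENNReal.ofReal_mul (exp_pos _).le,
    ← ENNReal.ofReal_mul (one_div_pos.2 hpos).le, ← ENNReal.ofReal_mul hC,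
    ← ENNReal.ofReal_mul' (hf s)]
  refine ENNReal.ofReal_le_ofReal ?_
  calc b t * f s ≤ C * (exp (-γ * (logScale t - logScale s)) * b s) * f s :=
        mul_le_mul_of_nonneg_right (hb s t hs.1 hs.2) (hf s)
    _ = C * (exp (-γ * (logScale t - logScale s)) * b s) * f s
          * ((1 / (s * ell s)) * (s * ell s)) := by
        rw [one_div_mul_cancel hpos.ne', mul_one]
    _ = _ := by ring

theorem limiting_hardy_inequality_i (q : ℝ) (hq : 1 ≤ q) (b : ℝ → ℝ)
    (hb : SlowlyVarying b) (hsq : EquivOn (fun t => b (t ^ 2)) b (Ioi 0))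
    (α β : ℝ) (hα : α < 0) (hβ : 0 < β)
    (hB0 : AlmostDecreasingOn (fun u => u ^ (-α) * assocB0 b u) (Ioc 0 1))
    (hBinf : AlmostIncreasingOn (fun u => u ^ (-β) * assocBinf b u) (Ioc 0 1)) :
    ∃ C > (0:ℝ), ∀ f : ℝ → ℝ, Measurable f → (∀ t, 0 ≤ f t) →
      (∫⁻ t in Ioi (0:ℝ),
          (ENNReal.ofReal (b t) * ∫⁻ s in Ioo (0:ℝ) t, ENNReal.ofReal (f s)) ^ q
            / ENNReal.ofReal (t * ell t)) ^ (1 / q)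
        ≤ ENNReal.ofReal C *
          (∫⁻ t in Ioi (0:ℝ),
            ENNReal.ofReal (t * b t * f t * ell t) ^ q
              / ENNReal.ofReal (t * ell t)) ^ (1 / q) := by
  obtain ⟨hmeas, hpos, -⟩ := hb
  obtain ⟨γ, hγ, C, hC, h⟩ := exists_exp_logScale_mul_le hpos hα hβ hB0 hBinf
  refine ⟨C * (1 / γ), by positivity, fun f hfm hf => ?_⟩
  have hq0 : 0 < q := by linarith
  have hg : Measurable fun t => ENNReal.ofReal (t * b t * f t * ell t) :=
    (((measurable_id.mul hmeas).mul hfm).mul measurable_ell).ennreal_ofReal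
  rw [← lintegral_logScaleMeasure_div, ← lintegral_logScaleMeasure_div,
    one_div, ENNReal.rpow_inv_le_iff hq0, ENNReal.mul_rpow_of_nonneg _ _ hq0.le,
    ENNReal.rpow_inv_rpow hq0.ne', ENNReal.ofReal_mul hC.le, ENNReal.mul_rpow_of_nonneg _ _ hq0.le,
    mul_assoc]
  refine le_trans (lintegral_mono fun t => ENNReal.rpow_le_rpow
    (ofReal_mul_lintegral_le_expKernel hC.le hf h t) hq0.le) ?_
  simp only [ENNReal.mul_rpow_of_nonneg _ _ hq0.le]
  rw [lintegral_const_mul' _ _ (ENNReal.rpow_ne_top_of_nonneg hq0.le ENNReal.ofReal_ne_top)]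
  gcongr
  exact lintegral_rpow_expKernel_le hq hγ hg
end
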